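/- Let h, k ∈ M₊ have equal central support, with k properly infinite and h a countable sum of finite positive elements. Then h ≲ k in the Kadison–Pedersen ordering, i.e., h ≈ k' for some k' ≤ k. -/

import Mathlib

open ContinuousLinearMap Filter Topology

universe u

noncomputable section

variable {H : Type u} [NormedAddCommGroup H] [InnerProductSpace ℂ H] [CompleteSpace H]

/-- `p` is an (orthogonal) projection belonging to the von Neumann algebra `M`. -/
def IsProjIn (M : VonNeumannAlgebra H) (p : H →L[ℂ] H) : Prop :=
  p ∈ M ∧ IsSelfAdjoint p ∧ p * p = p

/-- Murray–von Neumann equivalence of `p` and `q` relative to `M`: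
there is a partial isometry `v ∈ M` with `v* v = p` and `v v* = q`. -/
def MvNEquiv (M : VonNeumannAlgebra H) (p q : H →L[ℂ] H) : Prop :=
  ∃ v ∈ M, adjoint v * v = p ∧ v * adjoint v = q

/-- The order on projections: `p ≤ q` iff `p q = p = q p`. -/
def ProjLE (p q : H →L[ℂ] H) : Prop := p * q = p ∧ q * p = p

/-- Murray–von Neumann subequivalence `p ≼ q`: `p` is equivalent to a subprojection of `q`. -/
def SubEquiv (M : VonNeumannAlgebra H) (p q : H →L[ℂ] H) : Prop :=
  ∃ r, IsProjIn M r ∧ MvNEquiv M p r ∧ ProjLE r q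

/-- `z` is a central projection of `M`. -/
def IsCentralProj (M : VonNeumannAlgebra H) (z : H →L[ℂ] H) : Prop :=
  IsProjIn M z ∧ ∀ x ∈ M, z * x = x * z

/-- A projection `p` is finite: `p ∼ q ≤ p` implies `q = p`. -/
def FiniteProj (M : VonNeumannAlgebra H) (p : H →L[ℂ] H) : Prop :=
  ∀ q, IsProjIn M q → ProjLE q p → MvNEquiv M p q → q = p

/-- A projection `p` is properly infinite: it is a countably infinite sum of pairwise
orthogonal projections, each equivalent to `p`. -/
def ProperlyInfiniteProj (M : VonNeumannAlgebra H) (p : H →L[ℂ] H) : Prop :=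
  p ≠ 0 ∧ ∃ e : ℕ → H →L[ℂ] H, (∀ n, IsProjIn M (e n)) ∧
    (Pairwise fun m n => e m * e n = 0) ∧ (∀ n, MvNEquiv M (e n) p) ∧
    ∀ ξ : H, HasSum (fun n => e n ξ) (p ξ)

/-- `z` is the central support of `h`: the smallest central projection with `z h = h`. -/
def IsCentralSupport (M : VonNeumannAlgebra H) (h z : H →L[ℂ] H) : Prop :=
  IsCentralProj M z ∧ z * h = h ∧ ∀ w, IsCentralProj M w → w * h = h → z * w = z

/-- The projection `e` is σ-finite relative to `M`: every family of pairwise orthogonal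
nonzero subprojections of `e` in `M` is countable. -/
def SigmaFiniteProj (M : VonNeumannAlgebra H) (e : H →L[ℂ] H) : Prop :=
  ∀ S : Set (H →L[ℂ] H), (∀ q ∈ S, IsProjIn M q ∧ q ≠ 0 ∧ ProjLE q e) →
    (S.Pairwise fun a b => a * b = 0) → S.Countable

/-- Kadison–Pedersen equivalence on the positive cone: `h ≈ k` iff there is a family
`{x_α} ⊆ M` with `h = Σ x_α* x_α` and `k = Σ x_α x_α*` (sums in the strong topology). -/
def KPEquiv (M : VonNeumannAlgebra H) (h k : H →L[ℂ] H) : Prop :=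
  ∃ (ι : Type u) (x : ι → H →L[ℂ] H), (∀ i, x i ∈ M) ∧
    (∀ ξ : H, HasSum (fun i => (adjoint (x i) * x i) ξ) (h ξ)) ∧
    (∀ ξ : H, HasSum (fun i => (x i * adjoint (x i)) ξ) (k ξ))

/-- Operator order: `a ≤ b` iff `b - a` is positive. -/
def OpLE (a b : H →L[ℂ] H) : Prop := (b - a).IsPositive

/-- `h ∈ M₊` is finite in the Kadison–Pedersen sense: `h ≈ k ≤ h` implies `k = h`. -/
def KPFinite (M : VonNeumannAlgebra H) (h : H →L[ℂ] H) : Prop :=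
  ∀ k, k ∈ M → k.IsPositive → OpLE k h → KPEquiv M h k → k = h

/-- `h ∈ M₊` is properly infinite: `z h` is finite and nonzero for no central projection `z`. -/
def KPProperlyInfinite (M : VonNeumannAlgebra H) (h : H →L[ℂ] H) : Prop :=
  h ≠ 0 ∧ ∀ z, IsCentralProj M z → KPFinite M (z * h) → z * h = 0

/-- The set of projections of `M`. -/
def ProjSet (M : VonNeumannAlgebra H) := {p : H →L[ℂ] H // IsProjIn M p}

/-- The strong operator topology on the projections of `M` (topology of pointwise convergence). -/
instance (M : VonNeumannAlgebra H) : TopologicalSpace (ProjSet M) :=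
  TopologicalSpace.induced (fun p : ProjSet M => (fun ξ => p.1 ξ : H → H)) inferInstance

/-- The quotient `P(M)/∼` of the projections of `M` by Murray–von Neumann equivalence,
carrying the quotient (strong operator) topology. -/
abbrev PQuot (M : VonNeumannAlgebra H) :=
  Quot (fun p q : ProjSet M => MvNEquiv M p.1 q.1)

/-- The quotient map `P(M) → P(M)/∼`. -/
def pquotMk (M : VonNeumannAlgebra H) : ProjSet M → PQuot M := Quot.mk _

/-- The strong operator topology on `B(H)`. -/
def SOT : TopologicalSpace (H →L[ℂ] H) :=
  TopologicalSpace.induced (fun a : H →L[ℂ] H => (fun ξ => a ξ : H → H)) inferInstance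

/-- The order induced on `P(M)/∼` by Murray–von Neumann subequivalence. -/
def QLE (M : VonNeumannAlgebra H) (a b : PQuot M) : Prop :=
  ∃ p q : ProjSet M, a = pquotMk M p ∧ b = pquotMk M q ∧ SubEquiv M p.1 q.1

set_option linter.unusedSectionVars false

/-! ### Quadratic forms -/

/-- The quadratic form of an operator, with values in `[0, ∞]`. -/
def QF (a : H →L[ℂ] H) (ξ : H) : ENNReal := ENNReal.ofReal (a.reApplyInnerSelf ξ)

lemma QF_ne_top (a : H →L[ℂ] H) (ξ : H) : QF a ξ ≠ ⊤ := ENNReal.ofReal_ne_top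

lemma enorm_sq_eq (η : H) : ‖η‖ₑ ^ 2 = ENNReal.ofReal (‖η‖ ^ 2) := by
  rw [← ofReal_norm, ENNReal.ofReal_pow (norm_nonneg _)]

lemma reAI_nonneg {a : H →L[ℂ] H} (ha : a.IsPositive) (ξ : H) : 0 ≤ a.reApplyInnerSelf ξ :=
  ha.2 ξ

lemma reAI_add (a b : H →L[ℂ] H) (ξ : H) :
    (a + b).reApplyInnerSelf ξ = a.reApplyInnerSelf ξ + b.reApplyInnerSelf ξ := by
  simp [reApplyInnerSelf_apply, inner_add_left]

lemma reAI_sub (a b : H →L[ℂ] H) (ξ : H) :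
    (a - b).reApplyInnerSelf ξ = a.reApplyInnerSelf ξ - b.reApplyInnerSelf ξ := by
  simp [reApplyInnerSelf_apply, inner_sub_left]

lemma QF_add {a b : H →L[ℂ] H} (ha : a.IsPositive) (hb : b.IsPositive) (ξ : H) :
    QF (a + b) ξ = QF a ξ + QF b ξ := by
  rw [QF, reAI_add, ENNReal.ofReal_add (reAI_nonneg ha ξ) (reAI_nonneg hb ξ)]; rfl

lemma reAI_adj_mul (x : H →L[ℂ] H) (ξ : H) :
    (adjoint x * x).reApplyInnerSelf ξ = ‖x ξ‖ ^ 2 := by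
  rw [reApplyInnerSelf_apply, mul_apply_eq_comp, adjoint_inner_left, inner_self_eq_norm_sq]

lemma QF_adj_mul (x : H →L[ℂ] H) (ξ : H) : QF (adjoint x * x) ξ = ‖x ξ‖ₑ ^ 2 := by
  rw [QF, reAI_adj_mul, enorm_sq_eq]

lemma opLE_iff {a b : H →L[ℂ] H} (ha : a.IsPositive) (hb : b.IsPositive) :
    OpLE a b ↔ ∀ ξ, QF a ξ ≤ QF b ξ := by
  have hs : (b - a).IsPositive ↔ ∀ ξ, 0 ≤ (b - a).reApplyInnerSelf ξ := by
    rw [isPositive_def']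
    exact ⟨fun h => h.2, fun h => ⟨hb.isSelfAdjoint.sub ha.isSelfAdjoint, h⟩⟩
  rw [OpLE, hs]
  refine forall_congr' fun ξ => ?_
  rw [reAI_sub, QF, QF, ENNReal.ofReal_le_ofReal_iff (reAI_nonneg hb ξ), sub_nonneg]

lemma opLE_antisymm {a b : H →L[ℂ] H} (h1 : OpLE a b) (h2 : OpLE b a) : a = b :=
  le_antisymm ((ContinuousLinearMap.le_def a b).2 h1) ((ContinuousLinearMap.le_def b a).2 h2)

lemma QF_ext {a b : H →L[ℂ] H} (ha : a.IsPositive) (hb : b.IsPositive)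
    (h : ∀ ξ, QF a ξ = QF b ξ) : a = b :=
  opLE_antisymm ((opLE_iff ha hb).2 fun ξ => (h ξ).le) ((opLE_iff hb ha).2 fun ξ => (h ξ).ge)

lemma isPositive_adj_mul (x : H →L[ℂ] H) : (adjoint x * x).IsPositive :=
  isPositive_adjoint_comp_self x

/-! ### Membership -/

lemma mem_of_comm {M : VonNeumannAlgebra H} {x : H →L[ℂ] H}
    (h : ∀ n ∈ M.commutant, n * x = x * n) : x ∈ M := by
  rw [← M.commutant_commutant]
  exact VonNeumannAlgebra.mem_commutant_iff.2 h

lemma comm_of_mem {M : VonNeumannAlgebra H} {x n : H →L[ℂ] H} (hx : x ∈ M)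
    (hn : n ∈ M.commutant) : n * x = x * n :=
  (VonNeumannAlgebra.mem_commutant_iff.1 hn x hx).symm

lemma adj_mem {M : VonNeumannAlgebra H} {x : H →L[ℂ] H} (hx : x ∈ M) : adjoint x ∈ M :=
  star_mem (s := M) hx

lemma smul_mem' {M : VonNeumannAlgebra H} {x : H →L[ℂ] H} (c : ℂ) (hx : x ∈ M) : c • x ∈ M :=
  mem_of_comm fun n hn => by rw [mul_smul_comm, smul_mul_assoc, comm_of_mem hx hn]

lemma exists_sqrt {M : VonNeumannAlgebra H} {a : H →L[ℂ] H} (ha : a ∈ M) (hp : a.IsPositive) :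
    ∃ r ∈ M, adjoint r = r ∧ r * r = a ∧ ∀ ξ, ‖r ξ‖ₑ ^ 2 = QF a ξ := by
  have h0 : 0 ≤ a := (nonneg_iff_isPositive a).2 hp
  have hsa : adjoint (CFC.sqrt a) = CFC.sqrt a :=
    ((nonneg_iff_isPositive _).1 (CFC.sqrt_nonneg a)).isSelfAdjoint
  refine ⟨CFC.sqrt a, ?_, hsa, CFC.sqrt_mul_sqrt_self a h0, ?_⟩
  · refine mem_of_comm fun n hn => ?_
    have : Commute a n := (comm_of_mem ha hn).symm
    exact (this.cfcₙ_nnreal _).symm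
  · intro ξ
    have := QF_adj_mul (CFC.sqrt a) ξ
    rw [hsa, CFC.sqrt_mul_sqrt_self a h0] at this
    exact this.symm

lemma QF_zero_apply {M : VonNeumannAlgebra H} {a : H →L[ℂ] H} (ha : a ∈ M) (hp : a.IsPositive)
    {ξ : H} (h : QF a ξ = 0) : a ξ = 0 := by
  obtain ⟨r, -, -, hr, hq⟩ := exists_sqrt ha hp
  have : r ξ = 0 := by simpa [h] using hq ξ
  rw [← hr, mul_apply_eq_comp, this, map_zero]

/-! ### Sums -/

/-- Column operator of a bounded family. -/
lemma exists_column {ι : Type u} (x : ι → H →L[ℂ] H) (C : ℝ) (hC : 0 ≤ C)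
    (hx : ∀ ξ, ∑' i, ‖x i ξ‖ₑ ^ 2 ≤ ENNReal.ofReal (C ^ 2 * ‖ξ‖ ^ 2)) :
    ∃ X : H →L[ℂ] lp (fun _ : ι => H) 2, ∀ ξ i, X ξ i = x i ξ := by
  have hb : ∀ ξ (s : Finset ι), ∑ i ∈ s, ‖x i ξ‖ ^ 2 ≤ C ^ 2 * ‖ξ‖ ^ 2 := by
    intro ξ s
    have := (ENNReal.sum_le_tsum s).trans (hx ξ)
    simp_rw [enorm_sq_eq] at this
    rwa [← ENNReal.ofReal_sum_of_nonneg (fun i _ => by positivity),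
      ENNReal.ofReal_le_ofReal_iff (by positivity)] at this
  have hm : ∀ ξ, Memℓp (fun i => x i ξ) 2 := fun ξ =>
    memℓp_gen' (C := C ^ 2 * ‖ξ‖ ^ 2) (by simpa using hb ξ)
  let X0 : H →ₗ[ℂ] lp (fun _ : ι => H) 2 :=
    { toFun := fun ξ => ⟨fun i => x i ξ, hm ξ⟩
      map_add' := fun a b => by ext i; exact (x i).map_add a b
      map_smul' := fun c a => by ext i; simp }
  refine ⟨X0.mkContinuous C fun ξ => ?_, fun ξ i => rfl⟩
  refine lp.norm_le_of_forall_sum_le (by norm_num) (by positivity) fun s => ?_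
  have hX0 : ∀ i, X0 ξ i = x i ξ := fun i => rfl
  simpa [mul_pow, hX0] using hb ξ s

lemma norm_lp_sq {ι : Type u} (f : lp (fun _ : ι => H) 2) :
    ∑' i, ‖f i‖ₑ ^ 2 = ENNReal.ofReal (‖f‖ ^ 2) := by
  have h1 := lp.hasSum_norm (p := 2) (by norm_num) f
  simp only [ENNReal.toReal_ofNat, Real.rpow_ofNat] at h1
  rw [← h1.tsum_eq, ENNReal.ofReal_tsum_of_nonneg (fun i => by positivity) h1.summable]
  simp_rw [enorm_sq_eq]

lemma column_hasSum {ι : Type u} (x : ι → H →L[ℂ] H) (X : H →L[ℂ] lp (fun _ : ι => H) 2)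
    (hX : ∀ ξ i, X ξ i = x i ξ) (ξ : H) :
    HasSum (fun i => (adjoint (x i) * x i) ξ) (adjoint X (X ξ)) := by
  classical
  have h1 := lp.hasSum_single (p := 2) (by norm_num) (X ξ)
  have h2 := h1.mapL (adjoint X)
  convert h2 using 2 with i
  refine ext_inner_right ℂ fun η => ?_
  rw [adjoint_inner_left, mul_apply_eq_comp, adjoint_inner_left, lp.inner_single_left, hX, hX]

lemma mem_of_hasSum {M : VonNeumannAlgebra H} {ι : Type u} {y : ι → H →L[ℂ] H}
    (hy : ∀ i, y i ∈ M) {a : H →L[ℂ] H} (h : ∀ ξ, HasSum (fun i => y i ξ) (a ξ)) : a ∈ M := by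
  refine mem_of_comm fun n hn => ?_
  ext ξ
  have h1 := (h ξ).mapL n
  have h2 := h (n ξ)
  refine h1.unique ?_
  have h3 : ∀ i, n (y i ξ) = y i (n ξ) := fun i =>
    congrArg (fun T : H →L[ℂ] H => T ξ) (comm_of_mem (hy i) hn)
  simp_rw [h3]
  exact h2

lemma form_of_hasSum {ι : Type*} {a : H →L[ℂ] H} {y : ι → H →L[ℂ] H}
    (hy : ∀ i, (y i).IsPositive)
    (h : ∀ ξ, HasSum (fun i => y i ξ) (a ξ)) (ξ : H) : ∑' i, QF (y i) ξ = QF a ξ := by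
  have h1 : HasSum (fun i => (y i).reApplyInnerSelf ξ) (a.reApplyInnerSelf ξ) := by
    have := ((h ξ).mapL (innerSL ℂ ξ)).mapL Complex.reCLM
    convert this using 2 with i
    · exact inner_re_symm (𝕜 := ℂ) _ _
    · exact inner_re_symm (𝕜 := ℂ) _ _
  rw [QF, ← h1.tsum_eq, ENNReal.ofReal_tsum_of_nonneg (fun i => reAI_nonneg (hy i) ξ) h1.summable]
  rfl

lemma QF_le_norm (a : H →L[ℂ] H) :
    ∀ ξ, QF a ξ ≤ ENNReal.ofReal ((Real.sqrt ‖a‖) ^ 2 * ‖ξ‖ ^ 2) := by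
  intro ξ
  refine ENNReal.ofReal_le_ofReal ?_
  rw [Real.sq_sqrt (norm_nonneg _), reApplyInnerSelf_apply]
  calc _ ≤ ‖(inner ℂ (a ξ) ξ : ℂ)‖ := RCLike.re_le_norm _
    _ ≤ ‖a ξ‖ * ‖ξ‖ := norm_inner_le_norm _ _
    _ ≤ ‖a‖ * ‖ξ‖ * ‖ξ‖ := by gcongr; exact a.le_opNorm ξ
    _ = _ := by ring

lemma exists_sum {M : VonNeumannAlgebra H} {ι : Type u} {x : ι → H →L[ℂ] H}
    (hM : ∀ i, x i ∈ M) {h : H →L[ℂ] H} (hx : ∀ ξ, ∑' i, ‖x i ξ‖ₑ ^ 2 ≤ QF h ξ) :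
    ∃ a ∈ M, a.IsPositive ∧ (∀ ξ, ∑' i, ‖x i ξ‖ₑ ^ 2 = QF a ξ) ∧
      ∀ ξ, HasSum (fun i => (adjoint (x i) * x i) ξ) (a ξ) := by
  obtain ⟨X, hX⟩ := exists_column x _ (Real.sqrt_nonneg _) fun ξ => (hx ξ).trans (QF_le_norm h ξ)
  have hs : ∀ ξ, HasSum (fun i => (adjoint (x i) * x i) ξ) ((adjoint X ∘L X) ξ) :=
    column_hasSum x X hX
  refine ⟨adjoint X ∘L X, mem_of_hasSum (fun i => mul_mem (adj_mem (hM i)) (hM i)) hs,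
    isPositive_adjoint_comp_self X, fun ξ => ?_, hs⟩
  rw [← form_of_hasSum (fun i => isPositive_adj_mul (x i)) hs]
  simp_rw [QF_adj_mul]

lemma hasSum_of_form {M : VonNeumannAlgebra H} {ι : Type u} {x : ι → H →L[ℂ] H}
    (hM : ∀ i, x i ∈ M) {h : H →L[ℂ] H} (hp : h.IsPositive)
    (hx : ∀ ξ, ∑' i, ‖x i ξ‖ₑ ^ 2 = QF h ξ) (ξ : H) :
    HasSum (fun i => (adjoint (x i) * x i) ξ) (h ξ) := by
  obtain ⟨a, -, ap, aq, as⟩ := exists_sum hM fun ξ => (hx ξ).le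
  have : a = h := QF_ext ap hp fun ξ => by rw [← aq, hx]
  exact this ▸ as ξ

lemma KPEquiv_iff {M : VonNeumannAlgebra H} {h k : H →L[ℂ] H} (hp : h.IsPositive)
    (kp : k.IsPositive) : KPEquiv M h k ↔ ∃ (ι : Type u) (x : ι → H →L[ℂ] H), (∀ i, x i ∈ M) ∧
      (∀ ξ, ∑' i, ‖x i ξ‖ₑ ^ 2 = QF h ξ) ∧ (∀ ξ, ∑' i, ‖adjoint (x i) ξ‖ₑ ^ 2 = QF k ξ) := by
  constructor
  · rintro ⟨ι, x, hM, h1, h2⟩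
    refine ⟨ι, x, hM, fun ξ => ?_, fun ξ => ?_⟩
    · rw [← form_of_hasSum (fun i => isPositive_adj_mul (x i)) h1]
      simp_rw [QF_adj_mul]
    · have : ∀ i, x i * adjoint (x i) = adjoint (adjoint (x i)) * adjoint (x i) := fun i => by
        rw [adjoint_adjoint]
      simp_rw [this] at h2
      rw [← form_of_hasSum (fun i => isPositive_adj_mul _) h2]
      simp_rw [QF_adj_mul]
  · rintro ⟨ι, x, hM, h1, h2⟩
    refine ⟨ι, x, hM, hasSum_of_form hM hp h1, fun ξ => ?_⟩
    simpa using hasSum_of_form (fun i => adj_mem (hM i)) kp h2 ξ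

/-! ### Factorization -/

lemma eq_of_range_ker {r A B : H →L[ℂ] H} (hr : adjoint r = r) (h1 : A * r = B * r)
    (h2 : ∀ η, r η = 0 → A η = B η) : A = B := by
  have hK : IsClosed ((A - B).ker : Set H) := (A - B).isClosed_ker
  have : CompleteSpace (A - B).ker := hK.completeSpace_coe
  have hr1 : r.range ≤ (A - B).ker := by
    rintro _ ⟨ξ, rfl⟩
    have : A (r ξ) = B (r ξ) := congrArg (fun T : H →L[ℂ] H => T ξ) h1
    simp [this]
  have hr2 : r.rangeᗮ ≤ (A - B).ker := by
    rw [orthogonal_range, hr]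
    intro η hη
    have : r η = 0 := hη
    simp [h2 η this]
  have hb : (A - B).kerᗮ = ⊥ := by
    rw [eq_bot_iff]
    intro η hη
    have h3 : η ∈ (A - B).ker := hr2 (Submodule.orthogonal_le hr1 hη)
    have := (Submodule.mem_orthogonal _ _).1 hη η h3
    simpa using this
  have ht : (A - B).ker = ⊤ := (Submodule.orthogonal_eq_bot_iff).1 hb
  ext ξ
  have : ξ ∈ (A - B).ker := ht ▸ Submodule.mem_top
  have h4 : (A - B) ξ = 0 := this
  simpa [sub_eq_zero] using h4

lemma exists_factor {M : VonNeumannAlgebra H} {ι : Type u} {t : ι → H →L[ℂ] H}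
    (tM : ∀ i, t i ∈ M) {k : H →L[ℂ] H} (kM : k ∈ M) (kp : k.IsPositive)
    (ht : ∀ ξ, ∑' i, ‖t i ξ‖ₑ ^ 2 = QF k ξ) :
    ∃ r ∈ M, adjoint r = r ∧ r * r = k ∧ (∀ ξ, ‖r ξ‖ₑ ^ 2 = QF k ξ) ∧
      ∃ v : ι → H →L[ℂ] H, (∀ i, v i ∈ M) ∧ (∀ i, v i * r = t i) ∧
        ∀ η, (∀ ζ, r ζ = 0 → inner ℂ ζ η = 0) → ∑' i, ‖v i η‖ₑ ^ 2 = ‖η‖ₑ ^ 2 := by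
  obtain ⟨r, rM, ra, rr, rq⟩ := exists_sqrt kM kp
  obtain ⟨X, hX⟩ := exists_column t _ (Real.sqrt_nonneg _) fun ξ => (ht ξ).le.trans (QF_le_norm k ξ)
  have hn : ∀ ξ, ‖X ξ‖ = ‖r ξ‖ := by
    intro ξ
    have h1 := norm_lp_sq (X ξ)
    simp_rw [hX, ht, ← rq, enorm_sq_eq] at h1
    rw [ENNReal.ofReal_eq_ofReal_iff (by positivity) (by positivity)] at h1
    exact ((pow_left_inj₀ (norm_nonneg _) (norm_nonneg _) two_ne_zero).1 h1).symm
  let K : Submodule ℂ H := r.range.topologicalClosure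
  have hKc : IsClosed (K : Set H) := Submodule.isClosed_topologicalClosure _
  have : CompleteSpace K := hKc.completeSpace_coe
  have hrK : ∀ ξ, r ξ ∈ K := fun ξ => Submodule.le_topologicalClosure _ ⟨ξ, rfl⟩
  let e : H →ₗ[ℂ] K := (r : H →ₗ[ℂ] H).codRestrict K hrK
  have he : ∀ ξ, (e ξ : H) = r ξ := fun ξ => rfl
  have hd : DenseRange e := by
    intro y
    rw [closure_subtype]
    have hy : (y : H) ∈ closure (r.range : Set H) := y.2
    refine closure_mono ?_ hy
    rintro _ ⟨ξ, rfl⟩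
    exact ⟨e ξ, ⟨ξ, rfl⟩, rfl⟩
  have hnorm : ∃ C, ∀ ξ, ‖(X : H →ₗ[ℂ] lp (fun _ : ι => H) 2) ξ‖ ≤ C * ‖e ξ‖ :=
    ⟨1, fun ξ => by rw [one_mul]; exact (hn ξ).le⟩
  let V0 : K →L[ℂ] lp (fun _ : ι => H) 2 := (X : H →ₗ[ℂ] lp (fun _ : ι => H) 2).extendOfNorm e
  have hV0 : ∀ ξ, V0 (e ξ) = X ξ := fun ξ => LinearMap.extendOfNorm_eq hd hnorm ξ
  have hiso : ∀ y, ‖V0 y‖ = ‖y‖ := by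
    intro y
    refine hd.induction_on (p := fun y => ‖V0 y‖ = ‖y‖) y
      (isClosed_eq (by fun_prop) (by fun_prop)) fun ξ => ?_
    rw [hV0, hn]; rfl
  let V : H →L[ℂ] lp (fun _ : ι => H) 2 := V0 ∘L K.orthogonalProjectionOnto
  have hVr : ∀ ξ, V (r ξ) = X ξ := by
    intro ξ
    have : K.orthogonalProjectionOnto (r ξ) = e ξ :=
      K.orthogonalProjectionOnto_mem_subspace_eq_self (e ξ)
    rw [← hV0, ← this]; rfl
  have hKo : Kᗮ = r.ker := by
    have := orthogonal_range r
    rw [ra] at this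
    rw [← this]
    exact Submodule.orthogonal_closure _
  have hVk : ∀ ζ, r ζ = 0 → V ζ = 0 := by
    intro ζ hζ
    have h1 : ζ ∈ Kᗮ := by rw [hKo]; exact hζ
    have : K.orthogonalProjectionOnto ζ = 0 := Submodule.orthogonalProjectionOnto_eq_zero_iff.2 h1
    have h2 : V ζ = V0 (K.orthogonalProjectionOnto ζ) := rfl
    rw [h2, this, map_zero]
  let v : ι → H →L[ℂ] H := fun i => lp.evalCLM ℂ (fun _ : ι => H) 2 i ∘L V
  have hv : ∀ i ξ, v i ξ = V ξ i := fun i ξ => rfl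
  have hvr : ∀ i, v i * r = t i := by
    intro i; ext ξ
    rw [mul_apply_eq_comp, hv, hVr, hX]
  refine ⟨r, rM, ra, rr, rq, v, fun i => ?_, hvr, fun η hη => ?_⟩
  · refine mem_of_comm fun n hn => eq_of_range_ker ra ?_ fun η hη => ?_
    · rw [mul_assoc, hvr, mul_assoc, comm_of_mem rM hn, ← mul_assoc, hvr, comm_of_mem (tM i) hn]
    · have h1 : r (n η) = 0 := by
        have : n (r η) = r (n η) := congrArg (fun T : H →L[ℂ] H => T η) (comm_of_mem rM hn)
        rw [← this, hη, map_zero]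
      rw [mul_apply_eq_comp, mul_apply_eq_comp, hv, hv, hVk _ hη, hVk _ h1]
      simp
  · have h1 : η ∈ K := by
      have h2 : η ∈ Kᗮᗮ := by
        rw [Submodule.mem_orthogonal, hKo]
        exact fun ζ hζ => hη ζ hζ
      rwa [Submodule.orthogonal_orthogonal] at h2
    have h2 : V η = V0 ⟨η, h1⟩ := by
      have : K.orthogonalProjectionOnto η = ⟨η, h1⟩ :=
        K.orthogonalProjectionOnto_mem_subspace_eq_self ⟨η, h1⟩
      rw [← this]; rfl
    simp_rw [hv]
    rw [norm_lp_sq, h2, hiso, enorm_sq_eq]; rfl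

/-! ### Finiteness -/

lemma tsum_triple {α β γ : Type u} (F : α → β → γ → ENNReal) :
    ∑' p : α × β × γ, F p.1 p.2.1 p.2.2 = ∑' l, ∑' j, ∑' i, F i j l := by
  rw [ENNReal.tsum_prod']
  calc ∑' i, ∑' q : β × γ, F i q.1 q.2 = ∑' i, ∑' j, ∑' l, F i j l :=
        tsum_congr fun i => ENNReal.tsum_prod'
    _ = ∑' i, ∑' l, ∑' j, F i j l := tsum_congr fun i => ENNReal.tsum_comm
    _ = ∑' l, ∑' i, ∑' j, F i j l := ENNReal.tsum_comm
    _ = _ := tsum_congr fun l => ENNReal.tsum_comm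

lemma finite_transport {M : VonNeumannAlgebra H} {ι : Type u} {x : ι → H →L[ℂ] H}
    (xM : ∀ i, x i ∈ M) {g k : H →L[ℂ] H} (gp : g.IsPositive)
    (kM : k ∈ M) (kp : k.IsPositive)
    (hg : ∀ ξ, ∑' i, ‖x i ξ‖ₑ ^ 2 = QF g ξ) (hk : ∀ ξ, ∑' i, ‖adjoint (x i) ξ‖ₑ ^ 2 = QF k ξ)
    (gf : KPFinite M g) : KPFinite M k := by
  intro k' k'M k'p hle heq
  have hle' := (opLE_iff k'p kp).1 hle
  obtain ⟨κ, y, yM, y1, y2⟩ := (KPEquiv_iff kp k'p).1 heq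
  obtain ⟨r, rM, ra, rr, rq, v, vM, vr, vn⟩ := exists_factor (fun i => adj_mem (xM i)) kM kp hk
  have rv : ∀ i, r * adjoint (v i) = x i := by
    intro i
    have := congrArg adjoint (vr i)
    rw [adjoint_adjoint] at this
    rw [← this]
    have h2 : adjoint (v i * r) = adjoint r * adjoint (v i) := star_mul (v i) r
    rw [h2, ra]
  have hker : ∀ ζ, r ζ = 0 → QF k ζ = 0 := fun ζ hζ => by rw [← rq, hζ]; simp
  -- vectors in the ranges of `y j`, `(y j)*` are orthogonal to the kernel of `r`
  have hy1 : ∀ j ξ, ∑' l, ‖v l (y j ξ)‖ₑ ^ 2 = ‖y j ξ‖ₑ ^ 2 := by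
    intro j ξ
    refine vn _ fun ζ hζ => ?_
    have h1 : ‖adjoint (y j) ζ‖ₑ ^ 2 ≤ 0 := by
      rw [← hker ζ hζ]
      exact (ENNReal.le_tsum j).trans ((y2 ζ).le.trans (hle' ζ))
    have h2 : adjoint (y j) ζ = 0 := by simpa using h1
    rw [← adjoint_inner_left, h2, inner_zero_left]
  have hy2 : ∀ j ξ, ∑' l, ‖v l (adjoint (y j) ξ)‖ₑ ^ 2 = ‖adjoint (y j) ξ‖ₑ ^ 2 := by
    intro j ξ
    refine vn _ fun ζ hζ => ?_
    have h1 : ‖y j ζ‖ₑ ^ 2 ≤ 0 := by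
      rw [← hker ζ hζ]
      exact (ENNReal.le_tsum j).trans (y1 ζ).le
    have h2 : y j ζ = 0 := by simpa using h1
    rw [adjoint_inner_right, h2, inner_zero_left]
  have hkv : ∀ i ξ, QF k (adjoint (v i) ξ) = ‖x i ξ‖ₑ ^ 2 := by
    intro i ξ
    rw [← rq, ← rv i, mul_apply_eq_comp]
  obtain ⟨w, hw⟩ : ∃ w : ι × κ × ι → H →L[ℂ] H,
      ∀ i j l, w (i, j, l) = v l * y j * adjoint (v i) :=
    ⟨fun p => v p.2.2 * y p.2.1 * adjoint (v p.1), fun _ _ _ => rfl⟩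
  have wapp : ∀ i j l ξ, w (i, j, l) ξ = v l (y j (adjoint (v i) ξ)) := by
    intro i j l ξ
    rw [hw, mul_apply_eq_comp, mul_apply_eq_comp]
  have wadj : ∀ i j l ξ, adjoint (w (i, j, l)) ξ = v i (adjoint (y j) (adjoint (v l) ξ)) := by
    intro i j l ξ
    refine ext_inner_right ℂ fun η => ?_
    rw [adjoint_inner_left, wapp, ← adjoint_inner_left, ← adjoint_inner_left, adjoint_inner_right]
  have wM : ∀ p, w p ∈ M := by
    rintro ⟨i, j, l⟩
    rw [hw]
    exact mul_mem (mul_mem (vM _) (yM _)) (adj_mem (vM _))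
  have w1 : ∀ ξ, ∑' p, ‖w p ξ‖ₑ ^ 2 = QF g ξ := by
    intro ξ
    rw [ENNReal.tsum_prod', ← hg]
    refine tsum_congr fun i => ?_
    rw [ENNReal.tsum_prod']
    simp_rw [wapp]
    rw [← hkv, ← y1]
    exact tsum_congr fun j => hy1 j _
  have w2 : ∀ ξ, ∑' p, ‖adjoint (w p) ξ‖ₑ ^ 2 = ∑' l, QF k' (adjoint (v l) ξ) := by
    intro ξ
    rw [tsum_triple fun i j l => ‖adjoint (w (i, j, l)) ξ‖ₑ ^ 2]
    refine tsum_congr fun l => ?_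
    simp_rw [wadj]
    rw [← y2]
    exact tsum_congr fun j => hy2 j _
  have w3 : ∀ ξ, ∑' l, QF k (adjoint (v l) ξ) = QF g ξ := by
    intro ξ; simp_rw [hkv]; exact hg ξ
  have w4 : ∀ ξ, ∑' p, ‖adjoint (w p) ξ‖ₑ ^ 2 ≤ QF g ξ := by
    intro ξ
    rw [w2, ← w3]
    exact ENNReal.tsum_le_tsum fun l => hle' _
  obtain ⟨g1, g1M, g1p, g1q, -⟩ := exists_sum (fun p => adj_mem (wM p)) w4
  have hgg : g1 = g := gf g1 g1M g1p ((opLE_iff g1p gp).2 fun ξ => by rw [← g1q]; exact w4 ξ)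
    ((KPEquiv_iff gp g1p).2 ⟨_, w, wM, w1, g1q⟩)
  have hd : OpLE k' k := hle
  have hdM : k - k' ∈ M := sub_mem kM k'M
  have hkd : ∀ ξ, QF k ξ = QF k' ξ + QF (k - k') ξ := by
    intro ξ
    rw [← QF_add k'p hd, add_sub_cancel]
  have hz : ∀ l ξ, QF (k - k') (adjoint (v l) ξ) = 0 := by
    intro l ξ
    have h1 : ∑' l, QF k' (adjoint (v l) ξ) + ∑' l, QF (k - k') (adjoint (v l) ξ)
        = ∑' l, QF k' (adjoint (v l) ξ) + 0 := by
      rw [← ENNReal.tsum_add, add_zero]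
      simp_rw [← hkd]
      rw [w3, ← w2, g1q, hgg]
    have h2 : ∑' l, QF k' (adjoint (v l) ξ) ≠ ⊤ := by
      rw [← w2, g1q]; exact QF_ne_top _ _
    have h3 := (ENNReal.add_right_inj h2).1 h1
    exact (ENNReal.tsum_eq_zero.1 h3) l
  have hz2 : ∀ l, v l * (k - k') = 0 := by
    intro l
    have h1 : (k - k') * adjoint (v l) = 0 := by
      ext ξ
      exact QF_zero_apply hdM hd (hz l ξ)
    have h2 := congrArg star h1
    rw [star_mul, star_zero, hd.isSelfAdjoint.star_eq] at h2
    rw [← h2]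
    exact congrArg (· * (k - k')) (star_star (v l)).symm
  have hz3 : ∀ ξ, (k - k') ξ = 0 := by
    intro ξ
    have h1 := vn ((k - k') ξ) fun ζ hζ => by
      have h2 : (k - k') ζ = 0 := by
        refine QF_zero_apply hdM hd ?_
        have := hkd ζ
        rw [hker ζ hζ] at this
        exact (add_eq_zero.1 this.symm).2
      rw [← hd.inner_left_eq_inner_right, h2, inner_zero_left]
    have h3 : ∀ l, v l ((k - k') ξ) = 0 := fun l =>
      congrArg (fun T : H →L[ℂ] H => T ξ) (hz2 l)
    simp_rw [h3] at h1
    simpa using h1.symm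
  ext ξ
  have := hz3 ξ
  rw [sub_apply, sub_eq_zero] at this
  exact this.symm

lemma finite_sub {M : VonNeumannAlgebra H} {g h : H →L[ℂ] H} (gM : g ∈ M) (gp : g.IsPositive)
    (hM : h ∈ M) (hp : h.IsPositive) (hle : OpLE g h) (hf : KPFinite M h) : KPFinite M g := by
  intro g' g'M g'p g'le heq
  obtain ⟨κ, y, yM, y1, y2⟩ := (KPEquiv_iff gp g'p).1 heq
  have dM : h - g ∈ M := sub_mem hM gM
  have dp : (h - g).IsPositive := hle
  obtain ⟨r, rM, ra, rr, rq⟩ := exists_sqrt dM dp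
  have sp : (g' + (h - g)).IsPositive := g'p.add dp
  have hq : ∀ ξ, QF h ξ = QF g ξ + QF (h - g) ξ := by
    intro ξ
    rw [← QF_add gp dp, add_sub_cancel]
  have hopt : ∀ F : Option κ → ENNReal, ∑' o, F o = F none + ∑' j, F (some j) := by
    intro F
    rw [← (Equiv.optionEquivSumPUnit.{u} κ).symm.tsum_eq F,
      Summable.tsum_sum ENNReal.summable ENNReal.summable]
    simp [add_comm]
  have := hf (g' + (h - g)) (add_mem g'M dM) sp
    ((opLE_iff sp hp).2 fun ξ => by
      rw [QF_add g'p dp, hq]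
      gcongr
      exact (opLE_iff g'p gp).1 g'le ξ)
    ((KPEquiv_iff hp sp).2 ⟨Option κ, fun o => o.elim r y, fun o => by cases o <;> simp [rM, yM],
      fun ξ => by rw [hopt, hq, ← y1, ← rq, add_comm]; rfl,
      fun ξ => by rw [hopt, QF_add g'p dp, ← y2, ← rq, add_comm]; simp [ra]⟩)
  have h2 : g' + (h - g) = g + (h - g) := by rw [this]; abel
  exact add_right_cancel h2

lemma QF_smul {c : ℝ} (hc : 0 ≤ c) (a : H →L[ℂ] H) (ξ : H) :
    QF ((c : ℂ) • a) ξ = ENNReal.ofReal c * QF a ξ := by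
  rw [QF, QF, ← ENNReal.ofReal_mul hc]
  congr 1
  rw [reApplyInnerSelf_apply, reApplyInnerSelf_apply, smul_apply, inner_smul_left,
    Complex.conj_ofReal]
  exact Complex.re_ofReal_mul _ _

lemma smul_isPos {c : ℝ} (hc : 0 ≤ c) {a : H →L[ℂ] H} (ha : a.IsPositive) :
    ((c : ℂ) • a).IsPositive :=
  ha.smul_of_nonneg (by exact_mod_cast hc)

lemma finite_of_smul {M : VonNeumannAlgebra H} {c : ℝ} (hc : 0 < c) {a : H →L[ℂ] H}
    (ap : a.IsPositive) (hf : KPFinite M ((c : ℂ) • a)) : KPFinite M a := by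
  intro b bM bp ble heq
  obtain ⟨κ, y, yM, y1, y2⟩ := (KPEquiv_iff ap bp).1 heq
  have key : ∀ (z : H →L[ℂ] H) ξ, ‖(((Real.sqrt c : ℝ) : ℂ) • z) ξ‖ₑ ^ 2
      = ENNReal.ofReal c * ‖z ξ‖ₑ ^ 2 := by
    intro z ξ
    rw [enorm_sq_eq, enorm_sq_eq, ← ENNReal.ofReal_mul hc.le, smul_apply, norm_smul, mul_pow]
    simp [Real.sq_sqrt hc.le]
  have := hf _ (smul_mem' (c : ℂ) bM) (smul_isPos hc.le bp)
    ((opLE_iff (smul_isPos hc.le bp) (smul_isPos hc.le ap)).2 fun ξ => by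
      rw [QF_smul hc.le, QF_smul hc.le]
      gcongr
      exact (opLE_iff bp ap).1 ble ξ)
    ((KPEquiv_iff (smul_isPos hc.le ap) (smul_isPos hc.le bp)).2
      ⟨κ, fun j => ((Real.sqrt c : ℝ) : ℂ) • y j, fun j => smul_mem' _ (yM j), fun ξ => by
        simp_rw [key, ENNReal.tsum_mul_left, y1, QF_smul hc.le], fun ξ => by
        have : ∀ j, adjoint ((((Real.sqrt c : ℝ) : ℂ)) • y j)
            = ((Real.sqrt c : ℝ) : ℂ) • adjoint (y j) := fun j => by
              rw [map_smulₛₗ, Complex.conj_ofReal]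
        simp_rw [this, key, ENNReal.tsum_mul_left, y2, QF_smul hc.le]⟩)
  have hc' : (c : ℂ) ≠ 0 := by exact_mod_cast hc.ne'
  exact smul_right_injective _ hc' this

/-! ### Comparison -/

lemma exists_central {M : VonNeumannAlgebra H} {h k : H →L[ℂ] H} (hM : h ∈ M)
    (h0 : ∀ m ∈ M, h * m * k = 0) :
    ∃ p, IsCentralProj M p ∧ h * p = 0 ∧ p * k = k := by
  let K : Submodule ℂ H := ⨅ m : M, (h * (m : H →L[ℂ] H)).ker
  have hK : ∀ η, η ∈ K ↔ ∀ m ∈ M, h (m η) = 0 := by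
    intro η
    simp [K, Submodule.mem_iInf]
  have hKc : IsClosed (K : Set H) := by
    have : (K : Set H) = ⋂ m : M, ((h * (m : H →L[ℂ] H)).ker : Set H) := by
      simp [K]
    rw [this]
    exact isClosed_iInter fun m => (h * (m : H →L[ℂ] H)).isClosed_ker
  have : CompleteSpace K := hKc.completeSpace_coe
  have pS : IsStarProjection K.starProjection := isStarProjection_starProjection
  have psa : star K.starProjection = K.starProjection := pS.isSelfAdjoint
  have hcomm : ∀ n : H →L[ℂ] H, (∀ η ∈ K, n η ∈ K) → (∀ η ∈ K, (star n) η ∈ K) →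
      K.starProjection * n = n * K.starProjection := by
    have key : ∀ n : H →L[ℂ] H, (∀ η ∈ K, n η ∈ K) →
        K.starProjection * n * K.starProjection = n * K.starProjection := by
      intro n hn
      ext ξ
      exact Submodule.starProjection_eq_self_iff.2 (hn _ (Submodule.starProjection_apply_mem K ξ))
    intro n h1 h2
    have h3 := key n h1
    have h4 := congrArg star (key (star n) h2)
    simp only [star_mul, star_star, psa] at h4
    rw [← h4, ← mul_assoc, h3]
  have hMinv : ∀ n ∈ M, ∀ η ∈ K, n η ∈ K := by
    intro n hn η hη
    rw [hK] at hη ⊢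
    exact fun m hm => hη (m * n) (mul_mem hm hn)
  have hM'inv : ∀ n ∈ M.commutant, ∀ η ∈ K, n η ∈ K := by
    intro n hn η hη
    rw [hK] at hη ⊢
    intro m hm
    have h1 : h (m (n η)) = n (h (m η)) :=
      congrArg (fun T : H →L[ℂ] H => T η) (comm_of_mem (mul_mem hM hm) hn).symm
    rw [h1, hη m hm, map_zero]
  refine ⟨K.starProjection, ⟨⟨mem_of_comm fun n hn => ?_, pS.isSelfAdjoint, pS.isIdempotentElem⟩,
    fun x hx => hcomm x (hMinv x hx) (hMinv _ (star_mem hx))⟩, ?_, ?_⟩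
  · exact (hcomm n (hM'inv n hn) (hM'inv _ (star_mem hn))).symm
  · ext ξ
    exact (hK _).1 (Submodule.starProjection_apply_mem K ξ) 1 (one_mem M)
  · ext ξ
    refine Submodule.starProjection_eq_self_iff.2 ((hK _).2 fun m hm => ?_)
    exact congrArg (fun T : H →L[ℂ] H => T ξ) (h0 m hm)

lemma exists_small (A : H →L[ℂ] H) (B : H →L[ℂ] H) :
    ∃ c : ℝ, 0 < c ∧ (∀ ξ, ‖((c : ℂ) • A) ξ‖ₑ ^ 2 ≤ ‖ξ‖ₑ ^ 2) ∧
      ∀ ξ, ‖((c : ℂ) • B) ξ‖ₑ ^ 2 ≤ ‖ξ‖ₑ ^ 2 := by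
  refine ⟨(1 + ‖A‖ + ‖B‖)⁻¹, by positivity, ?_, ?_⟩
  all_goals
    intro ξ
    gcongr
    rw [enorm_le_iff_norm_le, smul_apply, norm_smul, Complex.norm_real, norm_inv,
      Real.norm_of_nonneg (by positivity), inv_mul_le_iff₀ (by positivity)]
    refine (le_opNorm _ ξ).trans ?_
    gcongr
    linarith [norm_nonneg A, norm_nonneg B]

lemma comparison {M : VonNeumannAlgebra H} {h k : H →L[ℂ] H} (hM : h ∈ M) (hp : h.IsPositive)
    (kM : k ∈ M) (kp : k.IsPositive) :
    ∃ (ι : Type u) (x : ι → H →L[ℂ] H) (a b p : H →L[ℂ] H), (∀ i, x i ∈ M) ∧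
      (a ∈ M ∧ a.IsPositive ∧ OpLE a h ∧ ∀ ξ, ∑' i, ‖x i ξ‖ₑ ^ 2 = QF a ξ) ∧
      (b ∈ M ∧ b.IsPositive ∧ OpLE b k ∧ ∀ ξ, ∑' i, ‖adjoint (x i) ξ‖ₑ ^ 2 = QF b ξ) ∧
      IsCentralProj M p ∧ p * h = p * a ∧ (1 - p) * k = (1 - p) * b := by
  classical
  let P : Set (Set ((H →L[ℂ] H) × ℕ)) := {S | (∀ s ∈ S, s.1 ∈ M) ∧
    ∀ F : Finset ((H →L[ℂ] H) × ℕ), (F : Set _) ⊆ S → ∀ ξ,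
      ∑ s ∈ F, ‖s.1 ξ‖ₑ ^ 2 ≤ QF h ξ ∧ ∑ s ∈ F, ‖adjoint s.1 ξ‖ₑ ^ 2 ≤ QF k ξ}
  obtain ⟨S, hS⟩ : ∃ S, Maximal (· ∈ P) S := by
    refine (zorn_subset_nonempty P ?_ ∅ ⟨by simp, ?_⟩).imp fun S hS => hS.2
    · intro c hc hch hne
      refine ⟨⋃₀ c, ⟨?_, ?_⟩, fun s hs => Set.subset_sUnion_of_mem hs⟩
      · rintro s ⟨t, ht, hst⟩
        exact (hc ht).1 s hst
      · intro F hF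
        obtain ⟨t, ht, hFt⟩ := DirectedOn.exists_mem_subset_of_finite_of_subset_sUnion hne
          hch.directedOn F.finite_toSet hF
        exact (hc ht).2 F hFt
    · intro F hF ξ
      have : F = ∅ := by simpa using hF
      simp [this]
  have hSP : S ∈ P := hS.prop
  let x : S → H →L[ℂ] H := fun s => s.1.1
  have xM : ∀ s, x s ∈ M := fun s => hSP.1 s.1 s.2
  have hF : ∀ G : Finset S, ((G.map (Function.Embedding.subtype _) : Finset _) : Set _) ⊆ S := by
    intro G s hs
    simp only [Finset.coe_map, Set.mem_image] at hs
    obtain ⟨t, -, rfl⟩ := hs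
    exact t.2
  have x1 : ∀ ξ, ∑' s, ‖x s ξ‖ₑ ^ 2 ≤ QF h ξ := by
    intro ξ
    rw [ENNReal.tsum_eq_iSup_sum]
    refine iSup_le fun G => ?_
    have := (hSP.2 _ (hF G) ξ).1
    rwa [Finset.sum_map] at this
  have x2 : ∀ ξ, ∑' s, ‖adjoint (x s) ξ‖ₑ ^ 2 ≤ QF k ξ := by
    intro ξ
    rw [ENNReal.tsum_eq_iSup_sum]
    refine iSup_le fun G => ?_
    have := (hSP.2 _ (hF G) ξ).2
    rwa [Finset.sum_map] at this
  obtain ⟨a, aM, ap, aq, -⟩ := exists_sum xM x1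
  obtain ⟨b, bM, bp, bq, -⟩ := exists_sum (fun s => adj_mem (xM s)) x2
  have ale : OpLE a h := (opLE_iff ap hp).2 fun ξ => by rw [← aq]; exact x1 ξ
  have ble : OpLE b k := (opLE_iff bp kp).2 fun ξ => by rw [← bq]; exact x2 ξ
  have dM : h - a ∈ M := sub_mem hM aM
  have eM : k - b ∈ M := sub_mem kM bM
  have dp : (h - a).IsPositive := ale
  have ep : (k - b).IsPositive := ble
  have hq : ∀ ξ, QF h ξ = QF (h - a) ξ + QF a ξ := fun ξ => by
    rw [← QF_add dp ap, sub_add_cancel]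
  have kq : ∀ ξ, QF k ξ = QF (k - b) ξ + QF b ξ := fun ξ => by
    rw [← QF_add ep bp, sub_add_cancel]
  have hzero : ∀ m ∈ M, (h - a) * m * (k - b) = 0 := by
    intro m hm
    obtain ⟨r, rM, ra, rr, rq⟩ := exists_sqrt dM dp
    obtain ⟨s, sM, sa, ss, sq⟩ := exists_sqrt eM ep
    obtain ⟨c, hc, c1, c2⟩ := exists_small (s * adjoint m) (r * m)
    -- the new element
    obtain ⟨t, ht⟩ : ∃ t, t = (c : ℂ) • (s * adjoint m * r) := ⟨_, rfl⟩
    have tM : t ∈ M := ht ▸ smul_mem' _ (mul_mem (mul_mem sM (adj_mem hm)) rM)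
    have tadj : adjoint t = (c : ℂ) • (r * m * s) := by
      rw [ht, map_smulₛₗ, Complex.conj_ofReal]
      congr 1
      have : star (s * star m * r) = star r * m * star s := by simp [mul_assoc]
      have h3 : star r = r := ra
      have h4 : star s = s := sa
      rw [h3, h4] at this
      exact this
    have t1 : ∀ ξ, ‖t ξ‖ₑ ^ 2 ≤ QF (h - a) ξ := by
      intro ξ
      rw [← rq, ht]
      exact c1 (r ξ)
    have t2 : ∀ ξ, ‖adjoint t ξ‖ₑ ^ 2 ≤ QF (k - b) ξ := by
      intro ξ
      rw [← sq, tadj]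
      exact c2 (s ξ)
    have t0 : t = 0 := by
      by_cases hn : ∀ n : ℕ, (t, n) ∈ S
      · ext ξ
        have h1 : ∀ N : ℕ, (N : ENNReal) * ‖t ξ‖ₑ ^ 2 ≤ QF h ξ := by
          intro N
          have h2 := (hSP.2 ((Finset.range N).map ⟨fun n => (t, n), fun i j hij => by simpa using hij⟩)
            (by
              intro q hq
              simp only [Finset.coe_map, Set.mem_image] at hq
              obtain ⟨n, -, rfl⟩ := hq
              exact hn n) ξ).1
          rw [Finset.sum_map] at h2
          have h7 : ∑ n ∈ Finset.range N, ‖t ξ‖ₑ ^ 2 ≤ QF h ξ := h2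
          simpa using h7
        by_contra hne
        have hne' : ‖t ξ‖ₑ ^ 2 ≠ 0 := by simpa using hne
        obtain ⟨N, hN⟩ := ENNReal.exists_nat_mul_gt hne' (QF_ne_top h ξ)
        exact absurd (h1 N) (not_le.2 hN)
      · exfalso
        push Not at hn
        obtain ⟨n, hn⟩ := hn
        refine hn ?_
        have hins : insert (t, n) S ∈ P := by
          refine ⟨?_, fun F hF' ξ => ?_⟩
          · rintro q (rfl | hq)
            · exact tM
            · exact hSP.1 q hq
          · have hsub : ((F.erase (t, n) : Finset _) : Set _) ⊆ S := by
              intro q hq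
              have hq' := Finset.mem_erase.1 (Finset.mem_coe.1 hq)
              exact (hF' (Finset.mem_coe.2 hq'.2)).resolve_left hq'.1
            have hins' : F ⊆ insert (t, n) (F.erase (t, n)) := fun q hq => by
              by_cases h : q = (t, n) <;> simp [h, hq]
            have hle : ∀ φ : (H →L[ℂ] H) × ℕ → ENNReal, ∑ q ∈ F, φ q ≤ φ (t, n) + ∑' q : S, φ q := by
              intro φ
              refine (Finset.sum_le_sum_of_subset hins').trans ?_
              rw [Finset.sum_insert (by simp)]
              gcongr
              have h5 : ∑' q : ((F.erase (t, n) : Finset _) : Set ((H →L[ℂ] H) × ℕ)), φ q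
                  ≤ ∑' q : S, φ q := ENNReal.tsum_mono_subtype φ hsub
              rwa [Finset.tsum_subtype' (F.erase (t, n)) φ] at h5
            constructor
            · refine (hle fun q => ‖q.1 ξ‖ₑ ^ 2).trans ?_
              rw [hq, ← aq]
              gcongr
              exact t1 ξ
            · refine (hle fun q => ‖adjoint q.1 ξ‖ₑ ^ 2).trans ?_
              rw [kq, ← bq]
              gcongr
              exact t2 ξ
        exact hS.le_of_ge hins (Set.subset_insert _ _) (Set.mem_insert _ _)
    have hc' : (c : ℂ) ≠ 0 := by exact_mod_cast hc.ne'
    have h6 : r * m * s = 0 := by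
      have : (c : ℂ) • (r * m * s) = 0 := by rw [← tadj, t0, map_zero]
      exact (smul_eq_zero.1 this).resolve_left hc'
    calc (h - a) * m * (k - b) = r * (r * m * s) * s := by rw [← rr, ← ss]; simp only [mul_assoc]
      _ = 0 := by rw [h6, mul_zero, zero_mul]
  obtain ⟨p, pc, p1, p2⟩ := exists_central dM hzero
  refine ⟨S, x, a, b, p, xM, ⟨aM, ap, ale, aq⟩, ⟨bM, bp, ble, bq⟩, pc, ?_, ?_⟩
  · have := pc.2 _ dM
    rw [p1, mul_sub, sub_eq_zero] at this
    exact this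
  · rw [← sub_eq_zero, ← mul_sub, sub_mul, p2, one_mul, sub_self]

/-! ### Cutting by central projections -/

lemma central_compl {M : VonNeumannAlgebra H} {p : H →L[ℂ] H} (hp : IsCentralProj M p) :
    IsCentralProj M (1 - p) := by
  obtain ⟨⟨pM, psa, pp⟩, pc⟩ := hp
  refine ⟨⟨sub_mem (one_mem M) pM, (IsSelfAdjoint.one _).sub psa, ?_⟩, fun x hx => ?_⟩
  · rw [sub_mul, mul_sub, mul_sub, pp]; simp
  · rw [sub_mul, mul_sub, pc x hx]; simp

lemma cut {M : VonNeumannAlgebra H} {p a : H →L[ℂ] H} (hp : IsCentralProj M p) (aM : a ∈ M)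
    (ap : a.IsPositive) :
    p * a ∈ M ∧ (p * a).IsPositive ∧ (∀ ξ, QF (p * a) ξ = QF a (p ξ)) ∧ OpLE (p * a) a := by
  have gen : ∀ q, IsCentralProj M q → (q * a).IsPositive ∧ ∀ ξ, QF (q * a) ξ = QF a (q ξ) := by
    rintro q ⟨⟨qM, qsa, qq⟩, qc⟩
    have h1 : q * a = q * a * adjoint q := by
      have : adjoint q = q := qsa
      rw [this, mul_assoc, ← qc a aM, ← mul_assoc, qq]
    refine ⟨?_, fun ξ => ?_⟩
    · rw [h1]
      exact ap.conj_adjoint q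
    · have h2 : adjoint q = q := qsa
      rw [h1, QF, QF, reApplyInnerSelf_apply, reApplyInnerSelf_apply, mul_apply_eq_comp,
        mul_apply_eq_comp, ← adjoint_inner_right, h2]
  refine ⟨mul_mem hp.1.1 aM, (gen p hp).1, (gen p hp).2, ?_⟩
  have := (gen (1 - p) (central_compl hp)).1
  rwa [sub_mul, one_mul] at this

lemma core {M : VonNeumannAlgebra H} {h k z : H →L[ℂ] H} (hM : h ∈ M) (hp : h.IsPositive)
    (hf : KPFinite M h) (hz : z * h = h) (kM : k ∈ M) (kp : k.IsPositive)
    (kcs : IsCentralSupport M k z) (kinf : KPProperlyInfinite M k) :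
    ∃ (ι : Type u) (x : ι → H →L[ℂ] H), (∀ i, x i ∈ M) ∧
      (∀ ξ, ∑' i, ‖x i ξ‖ₑ ^ 2 = QF h ξ) ∧ (∀ ξ, ∑' i, ‖adjoint (x i) ξ‖ₑ ^ 2 ≤ QF k ξ) := by
  obtain ⟨ι, x, a, b, p, xM, ⟨aM, ap, ale, aq⟩, ⟨bM, bp, ble, bq⟩, pc, ph, pk⟩ :=
    comparison hM hp kM kp
  have cutx : ∀ q, IsCentralProj M q → (∀ i, x i * q ∈ M) ∧
      (∀ ξ, ∑' i, ‖(x i * q) ξ‖ₑ ^ 2 = QF (q * a) ξ) ∧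
      (∀ ξ, ∑' i, ‖adjoint (x i * q) ξ‖ₑ ^ 2 = QF (q * b) ξ) := by
    intro q hq
    refine ⟨fun i => mul_mem (xM i) hq.1.1, fun ξ => ?_, fun ξ => ?_⟩
    · rw [(cut hq aM ap).2.2.1, ← aq]; rfl
    · rw [(cut hq bM bp).2.2.1, ← bq]
      refine tsum_congr fun i => ?_
      have h1 : adjoint (x i * q) = adjoint (x i) * q := by
        have h2 : star (x i * q) = star q * star (x i) := star_mul _ _
        rw [hq.1.2.1.star_eq, hq.2 _ (star_mem (xM i))] at h2
        exact h2
      rw [h1]; rfl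
  have qc := central_compl pc
  obtain ⟨yM, y1, y2⟩ := cutx _ qc
  obtain ⟨gM, gp, -, gle⟩ := cut qc aM ap
  obtain ⟨qkM, qkp, -, -⟩ := cut qc kM kp
  have gh : OpLE ((1 - p) * a) h := (opLE_iff gp hp).2 fun ξ =>
    ((opLE_iff gp ap).1 gle ξ).trans ((opLE_iff ap hp).1 ale ξ)
  have gf : KPFinite M ((1 - p) * a) := finite_sub gM gp hM hp gh hf
  have kf : KPFinite M ((1 - p) * k) :=
    finite_transport yM gp qkM qkp y1 (fun ξ => by rw [y2, pk]) gf
  have k0 := kinf.2 _ qc kf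
  rw [sub_mul, one_mul, sub_eq_zero] at k0
  have zp : z * p = z := kcs.2.2 p pc k0.symm
  have hph : p * h = h := by
    have h1 : p * z = z := by rw [pc.2 z kcs.1.1.1, zp]
    rw [← hz, ← mul_assoc, h1]
  obtain ⟨wM, w1, w2⟩ := cutx p pc
  refine ⟨ι, _, wM, fun ξ => by rw [w1, ← ph, hph], fun ξ => ?_⟩
  obtain ⟨-, pbp, -, pble⟩ := cut pc bM bp
  rw [w2]
  exact ((opLE_iff pbp bp).1 pble ξ).trans ((opLE_iff bp kp).1 ble ξ)

/-- Let `h, k ∈ M₊` have equal central support, with `k` properly infinite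
and `h` a countable sum of finite positive elements.  Then `h ≲ k` in the Kadison–Pedersen
ordering: `h ≈ k'` for some `k' ≤ k`. -/
theorem kp_lessapprox (M : VonNeumannAlgebra H) (h k z : H →L[ℂ] H)
    (hh : h ∈ M) (hk : k ∈ M) (hpos : h.IsPositive) (kpos : k.IsPositive)
    (hcs : IsCentralSupport M h z) (kcs : IsCentralSupport M k z)
    (kinf : KPProperlyInfinite M k)
    (hsum : ∃ f : ℕ → H →L[ℂ] H,
      (∀ n, f n ∈ M ∧ (f n).IsPositive ∧ KPFinite M (f n)) ∧
      ∀ ξ : H, HasSum (fun n => f n ξ) (h ξ)) :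
    ∃ k', k' ∈ M ∧ k'.IsPositive ∧ OpLE k' k ∧ KPEquiv M h k' := by
  obtain ⟨f, hf, fs⟩ := hsum
  have fq : ∀ ξ, ∑' n, QF (f n) ξ = QF h ξ := form_of_hasSum (fun n => (hf n).2.1) fs
  have zf : ∀ n, z * f n = f n := by
    intro n
    have hz := central_compl hcs.1
    have h1 : (1 - z) * f n = 0 := by
      obtain ⟨cM, cp, cq, -⟩ := cut hz (hf n).1 (hf n).2.1
      obtain ⟨-, -, dq, -⟩ := cut hz hh hpos
      ext ξ
      refine QF_zero_apply cM cp ?_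
      have h2 : (1 - z) * h = 0 := by rw [sub_mul, one_mul, hcs.2.1, sub_self]
      have h3 : QF (f n) ((1 - z) ξ) ≤ QF h ((1 - z) ξ) := by
        rw [← fq]; exact ENNReal.le_tsum n
      rw [← cq, ← dq, h2] at h3
      simpa [QF, reApplyInnerSelf_apply] using h3
    rw [sub_mul, one_mul, sub_eq_zero] at h1
    exact h1.symm
  have step : ∀ n : ℕ, ∃ (ι : Type u) (x : ι → H →L[ℂ] H), (∀ i, x i ∈ M) ∧
      (∀ ξ, ∑' i, ‖x i ξ‖ₑ ^ 2 = QF (f n) ξ) ∧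
      (∀ ξ, ∑' i, ‖adjoint (x i) ξ‖ₑ ^ 2 ≤ ENNReal.ofReal ((1 / 2) * (1 / 2) ^ n) * QF k ξ) := by
    intro n
    have hc : (0 : ℝ) < (1 / 2) * (1 / 2) ^ n := by positivity
    obtain ⟨c, hcc⟩ : ∃ c : ℝ, c = (1 / 2) * (1 / 2) ^ n := ⟨_, rfl⟩
    rw [← hcc] at hc ⊢
    have hc' : (c : ℂ) ≠ 0 := by exact_mod_cast hc.ne'
    have hcancel : ∀ w : H →L[ℂ] H, w * ((c : ℂ) • k) = (c : ℂ) • k → w * k = k := by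
      intro w hw
      rw [mul_smul_comm] at hw
      exact smul_right_injective _ hc' hw
    have kcs' : IsCentralSupport M ((c : ℂ) • k) z :=
      ⟨kcs.1, by rw [mul_smul_comm, kcs.2.1], fun w hw hwk => kcs.2.2 w hw (hcancel w hwk)⟩
    have kinf' : KPProperlyInfinite M ((c : ℂ) • k) := by
      refine ⟨smul_ne_zero hc' kinf.1, fun w hw hfin => ?_⟩
      rw [mul_smul_comm] at hfin ⊢
      rw [kinf.2 w hw (finite_of_smul hc (cut hw hk kpos).2.1 hfin), smul_zero]
    obtain ⟨ι, x, xM, x1, x2⟩ := core (hf n).1 (hf n).2.1 (hf n).2.2 (zf n) (smul_mem' (c : ℂ) hk)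
      (smul_isPos hc.le kpos) kcs' kinf'
    refine ⟨ι, x, xM, x1, fun ξ => ?_⟩
    rw [← QF_smul hc.le]
    exact x2 ξ
  choose ι x xM x1 x2 using step
  let X : (Σ n, ι n) → H →L[ℂ] H := fun s => x s.1 s.2
  have XM : ∀ s, X s ∈ M := fun s => xM s.1 s.2
  have X1 : ∀ ξ, ∑' s, ‖X s ξ‖ₑ ^ 2 = QF h ξ := by
    intro ξ
    rw [ENNReal.tsum_sigma', ← fq]
    exact tsum_congr fun n => x1 n ξ
  have X2 : ∀ ξ, ∑' s, ‖adjoint (X s) ξ‖ₑ ^ 2 ≤ QF k ξ := by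
    intro ξ
    rw [ENNReal.tsum_sigma']
    refine (ENNReal.tsum_le_tsum fun n => x2 n ξ).trans ?_
    have hs : HasSum (fun n : ℕ => (1 / 2 : ℝ) * (1 / 2) ^ n) 1 := by
      have := hasSum_geometric_two.mul_left (1 / 2 : ℝ)
      norm_num at this ⊢
      exact this
    rw [ENNReal.tsum_mul_right, ← ENNReal.ofReal_tsum_of_nonneg (fun n => by positivity) hs.summable,
      hs.tsum_eq]
    simp
  obtain ⟨k', k'M, k'p, k'q, -⟩ := exists_sum (fun s => adj_mem (XM s)) X2
  exact ⟨k', k'M, k'p, (opLE_iff k'p kpos).2 fun ξ => by rw [← k'q]; exact X2 ξ,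
    (KPEquiv_iff hpos k'p).2 ⟨_, X, XM, X1, k'q⟩⟩
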